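/- arXiv:2602.06361 — 2 statements merged into one kernel-verified Lean document; each statement's English description precedes it below -/
import Mathlib

section
/- Let μ^a, μ^b ∈ [0,1]^m with OptEnvy ≤ −Δ for some Δ > 0, and let q ≥ 1 satisfy q ≤ (1/2) m³/Δ² and q ≤ m²/(log m)². In the thresholding allocation model (with estimate variance m/q), with probability at least 1 − 2 m⁶ exp(−(3/10)(log m)²), it holds simultaneously for all c in the grid C = {k/m³ : k = 1, …, m⁶} that f(c) ≤ −(1/5) m^{−3/2} q^{1/2} Δ² + (m/√q)·log m. -/
open MeasureTheory ProbabilityTheory Real Filter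
open scoped ENNReal NNReal Classical

noncomputable section

def envyAB {m : ℕ} (μa : Fin m → ℝ) (A : Finset (Fin m)) : ℝ :=
  ∑ i ∈ Aᶜ, μa i - ∑ i ∈ A, μa i

def envyBA {m : ℕ} (μb : Fin m → ℝ) (A : Finset (Fin m)) : ℝ :=
  ∑ i ∈ A, μb i - ∑ i ∈ Aᶜ, μb i

def envy {m : ℕ} (μa μb : Fin m → ℝ) (A : Finset (Fin m)) : ℝ :=
  max (envyAB μa A) (envyBA μb A)

def optEnvy {m : ℕ} (μa μb : Fin m → ℝ) : ℝ :=
  ⨅ A : Finset (Fin m), envy μa μb A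

/-- The joint law of the `2m` independent Gaussian estimates in the thresholding allocation
model: `ω (i, true) = v^a_i ~ N(μ^a_i, m/q)` and `ω (i, false) = v^b_i ~ N(μ^b_i, m/q)`. -/
def threshMeasure (m q : ℕ) (μa μb : Fin m → ℝ) : Measure ((Fin m × Bool) → ℝ) :=
  Measure.pi fun p => gaussianReal (if p.2 then μa p.1 else μb p.1) ((m : ℝ≥0) / (q : ℝ≥0))

/-- `x_i(c) = 1` if `c v^a_i − v^b_i > 0` and `x_i(c) = −1` otherwise. -/
def xSign {m : ℕ} (c : ℝ) (ω : (Fin m × Bool) → ℝ) (i : Fin m) : ℝ :=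
  if 0 < c * ω (i, true) - ω (i, false) then 1 else -1

/-- `e_a(c) = −∑ i x_i(c) μ^a_i`. -/
def eA {m : ℕ} (μa : Fin m → ℝ) (c : ℝ) (ω : (Fin m × Bool) → ℝ) : ℝ :=
  -∑ i, xSign c ω i * μa i

/-- `e_b(c) = ∑ i x_i(c) μ^b_i`. -/
def eB {m : ℕ} (μb : Fin m → ℝ) (c : ℝ) (ω : (Fin m × Bool) → ℝ) : ℝ :=
  ∑ i, xSign c ω i * μb i

/-- `f(c) = (c e_a(c) + e_b(c))/(1+c)`. -/
def fFun {m : ℕ} (μa μb : Fin m → ℝ) (c : ℝ) (ω : (Fin m × Bool) → ℝ) : ℝ :=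
  (c * eA μa c ω + eB μb c ω) / (1 + c)

/-- `e'_a(c) = −∑ i x_i(c) v^a_i`. -/
def eA' {m : ℕ} (c : ℝ) (ω : (Fin m × Bool) → ℝ) : ℝ :=
  -∑ i, xSign c ω i * ω (i, true)

/-- `e'_b(c) = ∑ i x_i(c) v^b_i`. -/
def eB' {m : ℕ} (c : ℝ) (ω : (Fin m × Bool) → ℝ) : ℝ :=
  ∑ i, xSign c ω i * ω (i, false)

/-!
Write `d i = (c * μa i - μb i) / (1 + c)` and let `V i` be the same combination of the estimates,
so that `V i` is Gaussian with mean `d i` and variance `v` between `m / (2 * q)` and `m / q`, and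
`f(c) = -∑ i, d i * sign (V i)` with independent terms. Each term has variance at most `v`: when
`|d i|` is much larger than `√v` the sign is almost deterministic. Its mean is at most
`-(2 / 5) * |d i| * min (|d i| / √v) 1`, and since every allocation has weighted envy at least
`-∑ i, |d i|`, the assumption `OptEnvy ≤ -Δ` gives `Δ ≤ ∑ i, |d i|`; by convexity the means then add
up to at most `-Δ ^ 2 / (5 * m * √v)`. Bernstein's exponential moment bound controls the deviation
for one `c`, and a union bound covers the grid.
-/

lemma exp_le_one_add_add_mul_sq {x : ℝ} (hx : |x| ≤ 1) : exp x ≤ 1 + x + 4 / 5 * x ^ 2 := by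
  have hbound := (abs_le.1 (Real.exp_bound hx (n := 3) (by norm_num))).2
  simp only [Finset.sum_range_succ, Finset.sum_range_zero, Nat.factorial] at hbound
  have hcube : |x| ^ 3 ≤ x ^ 2 := by
    rw [← sq_abs x]
    exact pow_le_pow_of_le_one (abs_nonneg x) hx (by norm_num)
  norm_num at hbound
  linarith [sq_nonneg x]

lemma sq_mul_rpow_mul_rpow_eq_sq_div_mul_sqrt (x : ℝ) {a b : ℝ} (ha : 0 < a) (hb : 0 < b) :
    a ^ (-(3 : ℝ) / 2) * b ^ ((1 : ℝ) / 2) * x ^ 2 = x ^ 2 / (a * √(a / b)) := by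
  have hpow : a ^ (-(3 : ℝ) / 2) = (a * √a)⁻¹ := by
    rw [show -(3 : ℝ) / 2 = -(1 + 1 / 2) by norm_num, rpow_neg ha.le, rpow_add ha, rpow_one,
      ← sqrt_eq_rpow]
  rw [hpow, ← sqrt_eq_rpow, sqrt_div ha.le]
  field

lemma sqrt_mul_div_self {a b : ℝ} (ha : 0 ≤ a) : √(a * (a / b)) = a / √b := by
  rw [← mul_div_assoc, sqrt_div (by positivity), sqrt_mul_self ha]

section Bernstein

variable {Ω : Type*} [MeasurableSpace Ω] {P : Measure Ω} [IsProbabilityMeasure P] {a b l : ℝ}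

lemma mgf_le_exp_variance_of_integral_eq_zero {Y : Ω → ℝ} (hY : AEMeasurable Y P)
    (hb : ∀ᵐ ω ∂P, |Y ω| ≤ b) (hmean : P[Y] = 0) (hl : |l| * b ≤ 1) :
    mgf Y P l ≤ exp (4 / 5 * l ^ 2 * Var[Y; P]) := by
  have hmem : ∀ᵐ ω ∂P, Y ω ∈ Set.Icc (-b) b := hb.mono fun ω hω ↦ abs_le.1 hω
  have hint : Integrable Y P := .of_mem_Icc (-b) b hY hmem
  have hsq : Integrable (fun ω ↦ Y ω ^ 2) P :=
    (memLp_of_bounded hmem hY.aestronglyMeasurable 2).integrable_sq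
  have hpoint : ∀ᵐ ω ∂P, exp (l * Y ω) ≤ 1 + l * Y ω + 4 / 5 * l ^ 2 * Y ω ^ 2 := by
    filter_upwards [hb] with ω hω
    have hlY : |l * Y ω| ≤ 1 := by
      rw [abs_mul]
      exact (mul_le_mul_of_nonneg_left hω (abs_nonneg l)).trans hl
    linarith [exp_le_one_add_add_mul_sq hlY, mul_pow l (Y ω) 2]
  calc mgf Y P l ≤ ∫ ω, (1 + l * Y ω + 4 / 5 * l ^ 2 * Y ω ^ 2) ∂P :=
        integral_mono_ae (integrable_exp_mul_of_mem_Icc hY hmem) (by fun_prop) hpoint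
    _ = 4 / 5 * l ^ 2 * Var[Y; P] + 1 := by
        rw [integral_add (by fun_prop) (by fun_prop), integral_add (by fun_prop) (by fun_prop),
          integral_const_mul, integral_const_mul, hmean, variance_of_integral_eq_zero hY hmean]
        simp [add_comm]
    _ ≤ exp (4 / 5 * l ^ 2 * Var[Y; P]) := add_one_le_exp _

lemma mgf_le_exp_integral_add_variance_of_mem_Icc {X : Ω → ℝ} (hX : AEMeasurable X P)
    (hb : ∀ᵐ ω ∂P, X ω ∈ Set.Icc a b) (hl : |l| * (b - a) ≤ 1) :
    mgf X P l ≤ exp (l * P[X] + 4 / 5 * l ^ 2 * Var[X; P]) := by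
  have hint : Integrable X P := .of_mem_Icc a b hX hb
  have hmean : P[X] ∈ Set.Icc a b := (convex_Icc a b).integral_mem isClosed_Icc hb hint
  have habs : ∀ᵐ ω ∂P, |X ω - P[X]| ≤ b - a := by
    filter_upwards [hb] with ω hω
    exact abs_le.2 ⟨by linarith [hω.1, hmean.2], by linarith [hω.2, hmean.1]⟩
  calc mgf X P l = mgf (fun ω ↦ P[X] + (X ω - P[X])) P l := by simp
    _ = exp (l * P[X]) * mgf (fun ω ↦ X ω - P[X]) P l := mgf_const_add _
    _ ≤ exp (l * P[X]) * exp (4 / 5 * l ^ 2 * Var[fun ω ↦ X ω - P[X]; P]) := by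
        gcongr
        exact mgf_le_exp_variance_of_integral_eq_zero (hX.sub_const _) habs
          (by simp [integral_sub hint (integrable_const _)]) hl
    _ = exp (l * P[X] + 4 / 5 * l ^ 2 * Var[X; P]) := by
        rw [variance_sub_const hX.aestronglyMeasurable, ← exp_add]

lemma measureReal_sum_integral_add_le_sum_le {ι : Type*} [Fintype ι] {X : ι → Ω → ℝ}
    (hindep : iIndepFun X P) (hX : ∀ i, AEMeasurable (X i) P)
    (hb : ∀ i, ∀ᵐ ω ∂P, X i ω ∈ Set.Icc a b) (hl₀ : 0 ≤ l) (hl : l * (b - a) ≤ 1) (t : ℝ) :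
    P.real {ω | ∑ i, P[X i] + t ≤ ∑ i, X i ω} ≤
      exp (-l * t + 4 / 5 * l ^ 2 * ∑ i, Var[X i; P]) := by
  have hmgf : mgf (∑ i, X i) P l ≤
      exp (l * ∑ i, P[X i] + 4 / 5 * l ^ 2 * ∑ i, Var[X i; P]) := by
    rw [hindep.mgf_sum₀ hX, Finset.mul_sum, Finset.mul_sum, ← Finset.sum_add_distrib, exp_sum]
    exact Finset.prod_le_prod (fun i _ ↦ mgf_nonneg) fun i _ ↦
      mgf_le_exp_integral_add_variance_of_mem_Icc (hX i) (hb i) (by rwa [abs_of_nonneg hl₀])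
  have hsum : ∀ᵐ ω ∂P, (∑ i, X i) ω ∈ Set.Icc (∑ _ : ι, a) (∑ _ : ι, b) := by
    filter_upwards [ae_all_iff.2 hb] with ω hω
    rw [Finset.sum_apply]
    exact ⟨Finset.sum_le_sum fun i _ ↦ (hω i).1, Finset.sum_le_sum fun i _ ↦ (hω i).2⟩
  have hint : Integrable (fun ω ↦ exp (l * (∑ i, X i) ω)) P :=
    integrable_exp_mul_of_mem_Icc (Finset.aemeasurable_sum _ fun i _ ↦ hX i) hsum
  calc P.real {ω | ∑ i, P[X i] + t ≤ ∑ i, X i ω}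
      = P.real {ω | ∑ i, P[X i] + t ≤ (∑ i, X i) ω} := by simp only [Finset.sum_apply]
    _ ≤ exp (-l * (∑ i, P[X i] + t)) * mgf (∑ i, X i) P l :=
        measure_ge_le_exp_mul_mgf _ hl₀ hint
    _ ≤ exp (-l * (∑ i, P[X i] + t)) *
          exp (l * ∑ i, P[X i] + 4 / 5 * l ^ 2 * ∑ i, Var[X i; P]) := by gcongr
    _ = exp (-l * t + 4 / 5 * l ^ 2 * ∑ i, Var[X i; P]) := by
        rw [← exp_add]
        ring_nf

lemma one_sub_card_mul_le_measureReal_forall {ι : Type*} (S : Finset ι) (p : ι → Ω → Prop)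
    {ε : ℝ} (h : ∀ j ∈ S, P.real {ω | ¬ p j ω} ≤ ε) :
    1 - S.card * ε ≤ P.real {ω | ∀ j ∈ S, p j ω} := by
  have hbad : P.real {ω | ∀ j ∈ S, p j ω}ᶜ ≤ S.card * ε :=
    calc P.real {ω | ∀ j ∈ S, p j ω}ᶜ ≤ P.real (⋃ j ∈ S, {ω | ¬ p j ω}) :=
          measureReal_mono (fun ω hω ↦ by simpa using hω) (measure_ne_top _ _)
      _ ≤ ∑ j ∈ S, P.real {ω | ¬ p j ω} := measureReal_biUnion_finset_le _ _
      _ ≤ S.card * ε := by simpa using Finset.sum_le_card_nsmul _ _ _ h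
  have hcover := measureReal_union_le (μ := P) {ω | ∀ j ∈ S, p j ω} {ω | ∀ j ∈ S, p j ω}ᶜ
  rw [Set.union_compl_self, probReal_univ] at hcover
  linarith

end Bernstein

section GaussianSign

local notation "Φ" => cdf (gaussianReal 0 1)

lemma gaussianPDFReal_zero_one (x : ℝ) :
    gaussianPDFReal 0 1 x = (√(2 * π))⁻¹ * exp (-x ^ 2 / 2) := by
  simp [gaussianPDFReal]

lemma sq_gaussianPDFReal_zero_one (x : ℝ) :
    gaussianPDFReal 0 1 x ^ 2 = exp (-x ^ 2) / (2 * π) := by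
  rw [gaussianPDFReal_zero_one, mul_pow, inv_pow, sq_sqrt (by positivity), ← exp_nat_mul,
    inv_mul_eq_div]
  congr 2
  push_cast
  ring

lemma one_fifth_le_gaussianPDFReal_of_abs_le_one {x : ℝ} (hx : |x| ≤ 1) :
    1 / 5 ≤ gaussianPDFReal 0 1 x := by
  refine le_of_sq_le_sq ?_ (gaussianPDFReal_nonneg _ _ _)
  rw [sq_gaussianPDFReal_zero_one, le_div_iff₀ (by positivity)]
  calc (1 / 5) ^ 2 * (2 * π) ≤ (exp 1)⁻¹ := by
        rw [← one_div, le_div_iff₀ (exp_pos 1)]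
        nlinarith [pi_lt_d2, exp_one_lt_d9, exp_pos 1]
    _ = exp (-1) := (exp_neg 1).symm
    _ ≤ exp (-x ^ 2) := exp_le_exp.2 (neg_le_neg ((sq_le_one_iff_abs_le_one x).2 hx))

lemma four_mul_mul_gaussianPDFReal_le_one (t : ℝ) : 4 * t * gaussianPDFReal 0 1 t ≤ 1 := by
  refine le_of_sq_le_sq ?_ zero_le_one
  rw [mul_pow, sq_gaussianPDFReal_zero_one, ← mul_div_assoc, one_pow,
    div_le_one (by positivity)]
  have hpi : 16 * exp (-1) ≤ 2 * π := by
    rw [exp_neg, ← div_eq_mul_inv, div_le_iff₀ (exp_pos 1)]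
    nlinarith [pi_gt_d2, exp_one_gt_d9]
  linarith [mul_exp_neg_le_exp_neg_one (t ^ 2), mul_pow 4 t 2]

lemma hasDerivAt_gaussianPDFReal_zero_one (x : ℝ) :
    HasDerivAt (gaussianPDFReal 0 1) (-(x * gaussianPDFReal 0 1 x)) x := by
  have hexp : HasDerivAt (fun y : ℝ ↦ -y ^ 2 / 2) (-x) x :=
    ((hasDerivAt_pow 2 x).fun_neg.div_const 2).congr_deriv (by ring)
  rw [funext gaussianPDFReal_zero_one]
  exact (hexp.exp.const_mul (√(2 * π))⁻¹).congr_deriv (by ring)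

lemma integrable_mul_gaussianPDFReal_zero_one :
    Integrable (fun x ↦ x * gaussianPDFReal 0 1 x) := by
  have h := (integrable_mul_exp_neg_mul_sq (b := 1 / 2) (by norm_num)).const_mul (√(2 * π))⁻¹
  refine h.congr (.of_forall fun x ↦ ?_)
  simp only [gaussianPDFReal_zero_one]
  ring_nf

lemma tendsto_gaussianPDFReal_zero_one_atTop :
    Tendsto (gaussianPDFReal 0 1) atTop (nhds 0) :=
  tendsto_zero_of_hasDerivAt_of_integrableOn_Ioi (a := 0)
    (fun x _ ↦ hasDerivAt_gaussianPDFReal_zero_one x)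
    integrable_mul_gaussianPDFReal_zero_one.neg.integrableOn
    (integrable_gaussianPDFReal 0 1).integrableOn

lemma measureReal_gaussianReal_eq_integral (μ : ℝ) {v : ℝ≥0} (hv : v ≠ 0) (s : Set ℝ) :
    (gaussianReal μ v).real s = ∫ x in s, gaussianPDFReal μ v x := by
  rw [Measure.real, gaussianReal_apply_eq_integral _ hv,
    ENNReal.toReal_ofReal (integral_nonneg fun x ↦ gaussianPDFReal_nonneg _ _ _)]

lemma cdf_gaussianReal_zero_one_neg (x : ℝ) : Φ (-x) = 1 - Φ x := by
  have := nullSingletonClass_gaussianReal (μ := 0) (v := 1) one_ne_zero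
  rw [cdf_eq_real, cdf_eq_real, ← probReal_compl_eq_one_sub measurableSet_Iic, Set.compl_Iic,
    measureReal_congr Ioi_ae_eq_Ici]
  conv_rhs => rw [← neg_zero, ← gaussianReal_map_neg]
  rw [map_measureReal_apply (by fun_prop) measurableSet_Ici]
  congr 1
  ext y
  simp

lemma mul_one_sub_cdf_gaussianReal_le (t : ℝ) : t * (1 - Φ t) ≤ gaussianPDFReal 0 1 t := by
  have hint := integrable_mul_gaussianPDFReal_zero_one
  calc t * (1 - Φ t) = ∫ x in Set.Ioi t, t * gaussianPDFReal 0 1 x := by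
        rw [cdf_eq_real, ← probReal_compl_eq_one_sub measurableSet_Iic, Set.compl_Iic,
          measureReal_gaussianReal_eq_integral 0 one_ne_zero, integral_const_mul]
    _ ≤ ∫ x in Set.Ioi t, x * gaussianPDFReal 0 1 x :=
        setIntegral_mono_on ((integrable_gaussianPDFReal _ _).const_mul _).integrableOn
          hint.integrableOn measurableSet_Ioi fun x hx ↦
            mul_le_mul_of_nonneg_right hx.le (gaussianPDFReal_nonneg _ _ _)
    _ = -∫ x in Set.Ioi t, -(x * gaussianPDFReal 0 1 x) := by rw [integral_neg, neg_neg]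
    _ = gaussianPDFReal 0 1 t := by
        rw [integral_Ioi_of_hasDerivAt_of_tendsto'
          (fun x _ ↦ hasDerivAt_gaussianPDFReal_zero_one x) hint.neg.integrableOn
          tendsto_gaussianPDFReal_zero_one_atTop]
        ring

lemma two_fifths_mul_min_le_two_mul_cdf_gaussianReal_sub_one {t : ℝ} (ht : 0 ≤ t) :
    2 / 5 * min t 1 ≤ 2 * Φ t - 1 := by
  have hmin : 0 ≤ min t 1 := le_min ht zero_le_one
  have hmass : 1 / 5 * min t 1 ≤ Φ (min t 1) - Φ 0 := by
    rw [cdf_eq_real, cdf_eq_real, ← measureReal_sdiff (Set.Iic_subset_Iic.2 hmin)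
      measurableSet_Iic, Set.Iic_sdiff_Iic,
      measureReal_gaussianReal_eq_integral 0 one_ne_zero]
    calc 1 / 5 * min t 1 = 1 / 5 * volume.real (Set.Ioc 0 (min t 1)) := by simp [hmin]
      _ ≤ ∫ x in Set.Ioc 0 (min t 1), gaussianPDFReal 0 1 x :=
          setIntegral_ge_of_const_le_real measurableSet_Ioc (by simp)
            (fun x hx ↦ one_fifth_le_gaussianPDFReal_of_abs_le_one
              (abs_le.2 ⟨by linarith [hx.1], hx.2.trans (min_le_right t 1)⟩))
            (integrable_gaussianPDFReal 0 1).integrableOn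
  have hmono : Φ (min t 1) ≤ Φ t := monotone_cdf _ (min_le_left t 1)
  have hhalf := cdf_gaussianReal_zero_one_neg 0
  rw [neg_zero] at hhalf
  linarith

lemma sq_mul_one_sub_sq_cdf_gaussianReal_le_one (t : ℝ) :
    t ^ 2 * (1 - (2 * Φ t - 1) ^ 2) ≤ 1 := by
  wlog ht : 0 ≤ t generalizing t
  · have h := this (-t) (by linarith)
    rw [cdf_gaussianReal_zero_one_neg] at h
    linarith
  calc t ^ 2 * (1 - (2 * Φ t - 1) ^ 2) = Φ t * (4 * t * (t * (1 - Φ t))) := by ring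
    _ ≤ Φ t * (4 * t * gaussianPDFReal 0 1 t) :=
        mul_le_mul_of_nonneg_left (mul_le_mul_of_nonneg_left (mul_one_sub_cdf_gaussianReal_le t)
          (by positivity)) (cdf_nonneg _ t)
    _ ≤ Φ t * 1 := mul_le_mul_of_nonneg_left (four_mul_mul_gaussianPDFReal_le_one t)
        (cdf_nonneg _ t)
    _ ≤ 1 := by simpa using cdf_le_one _ t

lemma two_fifths_mul_abs_mul_min_le (t : ℝ) :
    2 / 5 * (|t| * min |t| 1) ≤ t * (2 * Φ t - 1) := by
  wlog ht : 0 ≤ t generalizing t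
  · have h := this (-t) (by linarith)
    rw [cdf_gaussianReal_zero_one_neg, abs_neg] at h
    linarith
  rw [abs_of_nonneg ht]
  linarith [mul_le_mul_of_nonneg_left
    (two_fifths_mul_min_le_two_mul_cdf_gaussianReal_sub_one ht) ht]

/-- The sign of a real number under the tie-breaking rule of the thresholding model, where `0` is
sent to `-1` (`SignType.sign` sends it to `0`). -/
def posSign (x : ℝ) : ℝ := if 0 < x then 1 else -1

lemma measurable_posSign : Measurable posSign :=
  Measurable.ite measurableSet_Ioi measurable_const measurable_const

lemma sq_posSign (x : ℝ) : posSign x ^ 2 = 1 := by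
  unfold posSign
  split_ifs <;> norm_num

lemma abs_posSign (x : ℝ) : |posSign x| = 1 := by
  rw [← sq_eq_sq₀ (abs_nonneg _) zero_le_one, sq_abs, sq_posSign, one_pow]

lemma cdf_gaussianReal (μ : ℝ) {v : ℝ≥0} (hv : v ≠ 0) (x : ℝ) :
    cdf (gaussianReal μ v) x = Φ ((x - μ) / √v) := by
  have hsqrt : 0 < √(v : ℝ) := by positivity
  have hmap : (gaussianReal 0 1).map (fun z ↦ √v * z + μ) = gaussianReal μ v := by
    change (gaussianReal 0 1).map ((· + μ) ∘ (√v * ·)) = _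
    rw [← Measure.map_map (by fun_prop) (by fun_prop), gaussianReal_map_const_mul,
      gaussianReal_map_add_const]
    congr
    · simp
    · ext
      simp
  rw [cdf_eq_real, cdf_eq_real, ← hmap, map_measureReal_apply (by fun_prop) measurableSet_Iic]
  congr 1
  ext z
  simp only [Set.mem_preimage, Set.mem_Iic]
  rw [le_div_iff₀' hsqrt, le_sub_iff_add_le]

variable {Ω : Type*} [MeasurableSpace Ω] {P : Measure Ω} {V : Ω → ℝ}
  {d : ℝ} {v : ℝ≥0}

lemma integral_posSign_of_hasLaw_gaussianReal (hV : HasLaw V (gaussianReal d v) P) (hv : v ≠ 0) :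
    ∫ ω, posSign (V ω) ∂P = 2 * Φ (d / √v) - 1 := by
  have hind : posSign = fun x ↦ 1 - 2 * (Set.Iic 0).indicator 1 x := by
    ext x
    rcases lt_or_ge 0 x with hx | hx
    · simp [posSign, hx]
    · norm_num [posSign, hx.not_gt, hx]
  calc ∫ ω, posSign (V ω) ∂P = ∫ x, posSign x ∂gaussianReal d v :=
        hV.integral_comp measurable_posSign.aestronglyMeasurable
    _ = 1 - 2 * (gaussianReal d v).real (Set.Iic 0) := by
        rw [hind, integral_sub (integrable_const _)
          (((integrable_const 1).indicator measurableSet_Iic).const_mul 2), integral_const_mul,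
          integral_indicator_one measurableSet_Iic]
        simp
    _ = 2 * Φ (d / √v) - 1 := by
        rw [← cdf_eq_real, cdf_gaussianReal d hv, zero_sub, neg_div, cdf_gaussianReal_zero_one_neg]
        ring

lemma variance_posSign_of_hasLaw_gaussianReal (hV : HasLaw V (gaussianReal d v) P) (hv : v ≠ 0) :
    Var[fun ω ↦ posSign (V ω); P] = 1 - (2 * Φ (d / √v) - 1) ^ 2 := by
  have := hV.isProbabilityMeasure
  have hmeas : AEStronglyMeasurable (fun ω ↦ posSign (V ω)) P :=
    (measurable_posSign.comp_aemeasurable hV.aemeasurable).aestronglyMeasurable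
  rw [variance_eq_sub (MemLp.of_bound hmeas 1 (.of_forall fun ω ↦ (abs_posSign _).le)),
    integral_posSign_of_hasLaw_gaussianReal hV hv]
  simp [sq_posSign]

lemma integral_mul_posSign_ge (hV : HasLaw V (gaussianReal d v) P) (hv : v ≠ 0) :
    2 / 5 * √v * (|d| / √v * min (|d| / √v) 1) ≤ ∫ ω, d * posSign (V ω) ∂P := by
  have hsqrt : 0 < √(v : ℝ) := by positivity
  calc 2 / 5 * √v * (|d| / √v * min (|d| / √v) 1)
      = √v * (2 / 5 * (|d / √v| * min |d / √v| 1)) := by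
        rw [abs_div, abs_of_pos hsqrt]
        ring
    _ ≤ √v * (d / √v * (2 * Φ (d / √v) - 1)) :=
        mul_le_mul_of_nonneg_left (two_fifths_mul_abs_mul_min_le _) hsqrt.le
    _ = ∫ ω, d * posSign (V ω) ∂P := by
        rw [integral_const_mul, integral_posSign_of_hasLaw_gaussianReal hV hv, ← mul_assoc,
          mul_div_cancel₀ d hsqrt.ne']

lemma variance_mul_posSign_le (hV : HasLaw V (gaussianReal d v) P) (hv : v ≠ 0) :
    Var[fun ω ↦ d * posSign (V ω); P] ≤ v := by
  have hd : d ^ 2 = v * (d / √v) ^ 2 := by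
    rw [div_pow, sq_sqrt v.coe_nonneg, mul_div_cancel₀ _ (NNReal.coe_ne_zero.2 hv)]
  rw [variance_const_mul, variance_posSign_of_hasLaw_gaussianReal hV hv, hd, mul_assoc]
  exact mul_le_of_le_one_right v.coe_nonneg (sq_mul_one_sub_sq_cdf_gaussianReal_le_one _)

end GaussianSign

lemma card_mul_sq_le_two_mul_sum_mul_min {ι : Type*} [Fintype ι] {t : ι → ℝ} {s : ℝ}
    (ht : ∀ i, 0 ≤ t i) (hs₀ : 0 ≤ s) (hs₁ : s ≤ 1) (hs : Fintype.card ι * s ≤ ∑ i, t i) :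
    Fintype.card ι * s ^ 2 ≤ 2 * ∑ i, t i * min (t i) 1 := by
  have htangent (i : ι) : 2 * s * t i - s ^ 2 ≤ 2 * (t i * min (t i) 1) := by
    rcases le_total (t i) 1 with h | h
    · rw [min_eq_left h]
      linarith [sq_nonneg (t i - s), sq_nonneg (t i)]
    · rw [min_eq_right h]
      linarith [mul_nonneg (ht i) (sub_nonneg.2 hs₁), sq_nonneg s]
  calc Fintype.card ι * s ^ 2 = 2 * s * (Fintype.card ι * s) - Fintype.card ι * s ^ 2 := by ring
    _ ≤ 2 * s * ∑ i, t i - Fintype.card ι * s ^ 2 := by gcongr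
    _ = ∑ i, (2 * s * t i - s ^ 2) := by
        rw [Finset.sum_sub_distrib, Finset.mul_sum, Finset.sum_const, Finset.card_univ,
          nsmul_eq_mul]
    _ ≤ 2 * ∑ i, t i * min (t i) 1 := by
        rw [Finset.mul_sum]
        exact Finset.sum_le_sum fun i _ ↦ htangent i

section SumGaussianSign

variable {ι Ω : Type*} [Fintype ι] [MeasurableSpace Ω] {P : Measure Ω} {V : ι → Ω → ℝ}
  {d : ι → ℝ} {v : ℝ≥0}

lemma sum_integral_mul_posSign_ge {s : ℝ} (hV : ∀ i, HasLaw (V i) (gaussianReal (d i) v) P)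
    (hv : v ≠ 0) (hs₀ : 0 ≤ s) (hs₁ : s ≤ 1) (hs : Fintype.card ι * √v * s ≤ ∑ i, |d i|) :
    1 / 5 * Fintype.card ι * √v * s ^ 2 ≤ ∑ i, ∫ ω, d i * posSign (V i ω) ∂P := by
  have hsqrt : 0 < √(v : ℝ) := by positivity
  have havg : Fintype.card ι * s ≤ ∑ i, |d i| / √v := by
    rw [← Finset.sum_div, le_div_iff₀ hsqrt]
    linarith
  have hmin := card_mul_sq_le_two_mul_sum_mul_min (fun i ↦ by positivity) hs₀ hs₁ havg
  calc 1 / 5 * Fintype.card ι * √v * s ^ 2 = 1 / 5 * √v * (Fintype.card ι * s ^ 2) := by ring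
    _ ≤ 1 / 5 * √v * (2 * ∑ i, |d i| / √v * min (|d i| / √v) 1) := by gcongr
    _ = ∑ i, 2 / 5 * √v * (|d i| / √v * min (|d i| / √v) 1) := by
        rw [← Finset.mul_sum]
        ring
    _ ≤ ∑ i, ∫ ω, d i * posSign (V i ω) ∂P :=
        Finset.sum_le_sum fun i _ ↦ integral_mul_posSign_ge (hV i) hv

theorem measureReal_le_neg_sum_mul_posSign_le {s B l : ℝ} (hindep : iIndepFun V P)
    (hV : ∀ i, HasLaw (V i) (gaussianReal (d i) v) P) (hv : v ≠ 0) (hd : ∀ i, |d i| ≤ B)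
    (hs₀ : 0 ≤ s) (hs₁ : s ≤ 1) (hs : Fintype.card ι * √v * s ≤ ∑ i, |d i|)
    (hl₀ : 0 ≤ l) (hl : l * (2 * B) ≤ 1) (t : ℝ) :
    P.real {ω | -(1 / 5 * Fintype.card ι * √v * s ^ 2) + t ≤ -∑ i, d i * posSign (V i ω)} ≤
      exp (-l * t + 4 / 5 * l ^ 2 * (Fintype.card ι * v)) := by
  have := hindep.isProbabilityMeasure
  set X : ι → Ω → ℝ := fun i ω ↦ -(d i * posSign (V i ω))
  have hterm (i : ι) : Measurable fun x ↦ -(d i * posSign x) :=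
    (measurable_posSign.const_mul (d i)).neg
  have hXmem (i : ι) (ω : Ω) : X i ω ∈ Set.Icc (-B) B := by
    rw [Set.mem_Icc, ← abs_le, abs_neg, abs_mul, abs_posSign, mul_one]
    exact hd i
  have hmean : ∑ i, P[X i] ≤ -(1 / 5 * Fintype.card ι * √v * s ^ 2) := by
    simp only [X, integral_neg, Finset.sum_neg_distrib]
    exact neg_le_neg (sum_integral_mul_posSign_ge hV hv hs₀ hs₁ hs)
  have hvar : ∑ i, Var[X i; P] ≤ Fintype.card ι * v := by
    simp only [X, variance_fun_neg]
    simpa using Finset.sum_le_card_nsmul Finset.univ _ _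
      fun i _ ↦ variance_mul_posSign_le (hV i) hv
  calc P.real {ω | -(1 / 5 * Fintype.card ι * √v * s ^ 2) + t ≤ -∑ i, d i * posSign (V i ω)}
      ≤ P.real {ω | ∑ i, P[X i] + t ≤ ∑ i, X i ω} := by
        refine measureReal_mono (fun ω hω ↦ ?_) (measure_ne_top _ _)
        simp only [Set.mem_ofPred_eq, X, Finset.sum_neg_distrib] at hω hmean ⊢
        linarith
    _ ≤ exp (-l * t + 4 / 5 * l ^ 2 * ∑ i, Var[X i; P]) :=
        measureReal_sum_integral_add_le_sum_le (hindep.comp _ hterm)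
          (fun i ↦ (hterm i).comp_aemeasurable (hV i).aemeasurable)
          (fun i ↦ .of_forall (hXmem i)) hl₀ (by linarith) t
    _ ≤ exp (-l * t + 4 / 5 * l ^ 2 * (Fintype.card ι * v)) := by gcongr

lemma measureReal_le_neg_sum_mul_posSign_le_exp_neg_sq [Nonempty ι] {D L w : ℝ}
    (hindep : iIndepFun V P) (hV : ∀ i, HasLaw (V i) (gaussianReal (d i) v) P) (hv : v ≠ 0)
    (hvw : v ≤ w) (hd : ∀ i, |d i| ≤ 1) (hD₀ : 0 ≤ D) (hD : D ≤ ∑ i, |d i|)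
    (hDv : D ^ 2 ≤ Fintype.card ι ^ 2 * v) (hL₀ : 0 ≤ L) (hL : L ^ 2 ≤ Fintype.card ι * w) :
    P.real {ω | -(1 / 5 * (D ^ 2 / (Fintype.card ι * √w))) + √(Fintype.card ι * w) * L ≤
      -∑ i, d i * posSign (V i ω)} ≤ exp (-(3 / 10) * L ^ 2) := by
  have := hindep.isProbabilityMeasure
  have hn : (0 : ℝ) < Fintype.card ι := by exact_mod_cast Fintype.card_pos
  have hv₀ : (0 : ℝ) < v := by positivity
  have hw₀ : 0 < w := hv₀.trans_le hvw
  set n := (Fintype.card ι : ℝ)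
  set s := D / (n * √v)
  set l := L / (2 * √(n * w))
  have hs₁ : s ≤ 1 := by
    rw [div_le_one (by positivity), ← sq_le_sq₀ hD₀ (by positivity), mul_pow, sq_sqrt hv₀.le]
    exact hDv
  have hs : n * √v * s ≤ ∑ i, |d i| := by
    rwa [mul_div_cancel₀ D (by positivity)]
  have hl : l * (2 * 1) ≤ 1 := by
    calc l * (2 * 1) = L / √(n * w) := by ring
      _ ≤ 1 := (div_le_one (by positivity)).2 (Real.le_sqrt_of_sq_le hL)
  have hdrift : D ^ 2 / (n * √w) ≤ n * √v * s ^ 2 :=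
    calc D ^ 2 / (n * √w) ≤ D ^ 2 / (n * √v) := by gcongr
      _ = n * √v * s ^ 2 := by field
  have hexponent : -l * (√(n * w) * L) + 4 / 5 * l ^ 2 * (n * v) ≤ -(3 / 10) * L ^ 2 := by
    calc -l * (√(n * w) * L) + 4 / 5 * l ^ 2 * (n * v)
        ≤ -l * (√(n * w) * L) + 4 / 5 * l ^ 2 * √(n * w) ^ 2 := by
          rw [sq_sqrt (by positivity)]
          gcongr
      _ = -(3 / 10) * L ^ 2 := by field
  calc P.real {ω | -(1 / 5 * (D ^ 2 / (n * √w))) + √(n * w) * L ≤ -∑ i, d i * posSign (V i ω)}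
      ≤ P.real {ω | -(1 / 5 * n * √v * s ^ 2) + √(n * w) * L ≤ -∑ i, d i * posSign (V i ω)} :=
        measureReal_mono (fun ω hω ↦ by
          simp only [Set.mem_ofPred_eq] at hω ⊢
          linarith) (measure_ne_top _ _)
    _ ≤ exp (-l * (√(n * w) * L) + 4 / 5 * l ^ 2 * (n * v)) :=
        measureReal_le_neg_sum_mul_posSign_le hindep hV hv hd (by positivity) hs₁ hs
          (by positivity) hl _
    _ ≤ exp (-(3 / 10) * L ^ 2) := exp_le_exp.2 hexponent

end SumGaussianSign

section WeightedGap

/-- The difference of two valuations `a` and `b` when they are weighted by `c : 1`, the weights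
being normalised to sum to `1`; the thresholding model gives an item to the first agent exactly
when its estimated weighted gap is positive. -/
def weightedGap (c a b : ℝ) : ℝ := (c * a - b) / (1 + c)

lemma abs_weightedGap_le_one {c a b : ℝ} (hc : 0 ≤ c) (ha : |a| ≤ 1) (hb : |b| ≤ 1) :
    |weightedGap c a b| ≤ 1 := by
  rw [weightedGap, abs_div, abs_of_pos (by positivity : 0 < 1 + c), div_le_one (by positivity)]
  calc |c * a - b| ≤ |c * a| + |b| := abs_sub _ _
    _ = c * |a| + |b| := by rw [abs_mul, abs_of_nonneg hc]
    _ ≤ 1 + c := by nlinarith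

lemma variance_weightedGap_mem_Icc {c : ℝ} (hc : 0 ≤ c) (v : ℝ≥0) :
    ↑(((1 + c ^ 2) / (1 + c) ^ 2).toNNReal * v) ∈ Set.Icc ((v : ℝ) / 2) v := by
  have hlower : 1 / 2 ≤ (1 + c ^ 2) / (1 + c) ^ 2 := by
    rw [le_div_iff₀ (by positivity)]
    linarith [sq_nonneg (1 - c)]
  have hupper : (1 + c ^ 2) / (1 + c) ^ 2 ≤ 1 := by
    rw [div_le_one (by positivity)]
    linarith
  rw [NNReal.coe_mul, Real.coe_toNNReal _ (by positivity)]
  exact ⟨by linarith [mul_le_mul_of_nonneg_right hlower v.coe_nonneg],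
    mul_le_of_le_one_left v.coe_nonneg hupper⟩

lemma hasLaw_weightedGap {Ω : Type*} [MeasurableSpace Ω] {P : Measure Ω} {X Y : Ω → ℝ}
    {μ ν : ℝ} {v : ℝ≥0} (hX : HasLaw X (gaussianReal μ v) P) (hY : HasLaw Y (gaussianReal ν v) P)
    (hindep : IndepFun X Y P) (c : ℝ) :
    HasLaw (fun ω ↦ weightedGap c (X ω) (Y ω))
      (gaussianReal (weightedGap c μ ν) (((1 + c ^ 2) / (1 + c) ^ 2).toNNReal * v)) P := by
  have hX' := gaussianReal_const_mul hX (c / (1 + c))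
  have hY' := gaussianReal_const_mul hY (-(1 / (1 + c)))
  have hindep' : IndepFun (fun ω ↦ c / (1 + c) * X ω) (fun ω ↦ -(1 / (1 + c)) * Y ω) P :=
    hindep.comp (measurable_const_mul (c / (1 + c))) (measurable_const_mul (-(1 / (1 + c))))
  convert hindep'.hasLaw_fun_add hX' hY' using 1
  · ext ω
    rw [weightedGap]
    ring
  · rw [gaussianReal_conv_gaussianReal]
    congr 1
    · rw [weightedGap]
      ring
    · ext
      push_cast
      rw [Real.coe_toNNReal _ (by positivity)]
      rw [neg_sq, div_pow, div_pow]
      ring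

end WeightedGap

lemma iIndepFun_curry {ι κ Ω 𝓧 : Type*} [MeasurableSpace Ω] [MeasurableSpace 𝓧] {P : Measure Ω}
    {X : ι × κ → Ω → 𝓧} (hX : ∀ p, Measurable (X p)) (h : iIndepFun X P) :
    iIndepFun (fun i ω j ↦ X (i, j) ω) P := by
  have := h.isProbabilityMeasure
  have (i : ι) (j : κ) : IsProbabilityMeasure (P.map (X (i, j))) :=
    Measure.isProbabilityMeasure_map (hX (i, j)).aemeasurable
  have hslice (i : ι) : P.map (fun ω j ↦ X (i, j) ω) =
      Measure.infinitePi fun j ↦ P.map (X (i, j)) :=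
    (iIndepFun_iff_map_fun_eq_infinitePi_map fun j ↦ hX (i, j)).1
      (h.precomp (Prod.mk_right_injective i))
  have hcurry : MeasurableEquiv.curry ι κ 𝓧 ∘ (fun ω p ↦ X p ω) = fun ω i j ↦ X (i, j) ω := rfl
  rw [iIndepFun_iff_map_fun_eq_infinitePi_map (by fun_prop), ← hcurry,
    ← Measure.map_map (by fun_prop) (by fun_prop),
    (iIndepFun_iff_map_fun_eq_infinitePi_map hX).1 h]
  simp only [hslice]
  exact Measure.infinitePi_map_curry fun i j ↦ P.map (X (i, j))

section ThresholdingModel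

variable {m q : ℕ} {μa μb : Fin m → ℝ} {c : ℝ}

instance : IsProbabilityMeasure (threshMeasure m q μa μb) := by
  unfold threshMeasure
  infer_instance

lemma iIndepFun_estimate :
    iIndepFun (fun (p : Fin m × Bool) ω ↦ ω p) (threshMeasure m q μa μb) :=
  iIndepFun_pi (X := fun _ x ↦ x) fun _ ↦ aemeasurable_id

lemma hasLaw_estimate (p : Fin m × Bool) :
    HasLaw (fun ω ↦ ω p) (gaussianReal (if p.2 then μa p.1 else μb p.1) (m / q))
      (threshMeasure m q μa μb) :=
  (measurePreserving_eval (fun p : Fin m × Bool ↦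
    gaussianReal (if p.2 then μa p.1 else μb p.1) ((m : ℝ≥0) / q)) p).hasLaw

lemma iIndepFun_weightedGap_estimate (c : ℝ) :
    iIndepFun (fun (i : Fin m) ω ↦ weightedGap c (ω (i, true)) (ω (i, false)))
      (threshMeasure m q μa μb) :=
  (iIndepFun_curry (fun p ↦ measurable_pi_apply p) iIndepFun_estimate).comp
    (fun _ u ↦ weightedGap c (u true) (u false)) fun _ ↦ by
      unfold weightedGap
      fun_prop

lemma hasLaw_weightedGap_estimate (c : ℝ) (i : Fin m) :
    HasLaw (fun ω ↦ weightedGap c (ω (i, true)) (ω (i, false)))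
      (gaussianReal (weightedGap c (μa i) (μb i))
        (((1 + c ^ 2) / (1 + c) ^ 2).toNNReal * (m / q))) (threshMeasure m q μa μb) :=
  hasLaw_weightedGap (hasLaw_estimate (i, true)) (hasLaw_estimate (i, false))
    (iIndepFun_estimate.indepFun (by simp)) c

lemma fFun_eq_neg_sum_weightedGap_mul_posSign (hc : 0 ≤ c) (ω : Fin m × Bool → ℝ) :
    fFun μa μb c ω = -∑ i, weightedGap c (μa i) (μb i) *
      posSign (weightedGap c (ω (i, true)) (ω (i, false))) := by
  have hsign (i : Fin m) :
      posSign (weightedGap c (ω (i, true)) (ω (i, false))) = xSign c ω i := by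
    simp only [posSign, weightedGap, xSign, div_pos_iff_of_pos_right (by positivity : 0 < 1 + c)]
  simp only [fFun, eA, eB, hsign]
  rw [mul_neg, Finset.mul_sum, neg_add_eq_sub, ← Finset.sum_sub_distrib, Finset.sum_div,
    ← Finset.sum_neg_distrib]
  refine Finset.sum_congr rfl fun i _ ↦ ?_
  rw [weightedGap]
  ring

lemma neg_optEnvy_le_sum_abs_weightedGap (hc : 0 ≤ c) :
    -optEnvy μa μb ≤ ∑ i, |weightedGap c (μa i) (μb i)| := by
  obtain ⟨A, hA⟩ : ∃ A, envy μa μb A = optEnvy μa μb := exists_eq_ciInf_of_finite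
  have hweighted : c * envyAB μa A + envyBA μb A ≤ (1 + c) * envy μa μb A :=
    calc c * envyAB μa A + envyBA μb A ≤ c * envy μa μb A + envy μa μb A := by
          gcongr
          · exact le_max_left _ _
          · exact le_max_right _ _
      _ = (1 + c) * envy μa μb A := by ring
  calc -optEnvy μa μb ≤ -(c * envyAB μa A + envyBA μb A) / (1 + c) := by
        rw [le_div_iff₀ (by positivity), ← hA]
        linarith
    _ = ∑ i ∈ A, weightedGap c (μa i) (μb i) + ∑ i ∈ Aᶜ, -weightedGap c (μa i) (μb i) := by
        simp only [weightedGap, envyAB, envyBA, Finset.sum_neg_distrib, ← Finset.sum_div,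
          Finset.sum_sub_distrib, ← Finset.mul_sum]
        ring
    _ ≤ ∑ i ∈ A, |weightedGap c (μa i) (μb i)| + ∑ i ∈ Aᶜ, |weightedGap c (μa i) (μb i)| :=
        add_le_add (Finset.sum_le_sum fun _ _ ↦ le_abs_self _)
          (Finset.sum_le_sum fun _ _ ↦ neg_le_abs _)
    _ = ∑ i, |weightedGap c (μa i) (μb i)| := Finset.sum_add_sum_compl A _

lemma measureReal_not_fFun_le_le_exp_neg_sq {Δ L : ℝ} (hμa : ∀ i, |μa i| ≤ 1)
    (hμb : ∀ i, |μb i| ≤ 1) (hm : 0 < m) (hq : 0 < q) (hΔ : 0 ≤ Δ) (hopt : optEnvy μa μb ≤ -Δ)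
    (hΔq : q * Δ ^ 2 ≤ 1 / 2 * m ^ 3) (hL : 0 ≤ L) (hLq : q * L ^ 2 ≤ m ^ 2) (hc : 0 ≤ c) :
    (threshMeasure m q μa μb).real {ω | ¬ fFun μa μb c ω ≤
      -(1 / 5) * (m : ℝ) ^ (-(3 : ℝ) / 2) * (q : ℝ) ^ ((1 : ℝ) / 2) * Δ ^ 2 + (m / √q) * L} ≤
      exp (-(3 / 10) * L ^ 2) := by
  have : Nonempty (Fin m) := ⟨⟨0, hm⟩⟩
  have hm' : (0 : ℝ) < m := by exact_mod_cast hm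
  have hq' : (0 : ℝ) < q := by exact_mod_cast hq
  obtain ⟨hwv, hvw⟩ := variance_weightedGap_mem_Icc hc (m / q)
  set v : ℝ≥0 := ((1 + c ^ 2) / (1 + c) ^ 2).toNNReal * (m / q)
  rw [NNReal.coe_div, NNReal.coe_natCast, NNReal.coe_natCast] at hwv hvw
  have hv₀ : v ≠ 0 := NNReal.coe_ne_zero.1 <| ne_of_gt <|
    (by positivity : (0 : ℝ) < m / q / 2).trans_le hwv
  have hΔv : Δ ^ 2 ≤ (m : ℝ) ^ 2 * v :=
    calc Δ ^ 2 ≤ 1 / 2 * m ^ 3 / q := by rwa [le_div_iff₀' hq']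
      _ = (m : ℝ) ^ 2 * (m / q / 2) := by ring
      _ ≤ (m : ℝ) ^ 2 * v := by gcongr
  have hLw : L ^ 2 ≤ m * (m / q) := by
    rw [← mul_div_assoc, le_div_iff₀' hq', ← sq]
    exact hLq
  have htail := measureReal_le_neg_sum_mul_posSign_le_exp_neg_sq
    (iIndepFun_weightedGap_estimate c) (hasLaw_weightedGap_estimate c) hv₀ hvw
    (fun i ↦ abs_weightedGap_le_one hc (hμa i) (hμb i)) hΔ
    ((le_neg_of_le_neg hopt).trans (neg_optEnvy_le_sum_abs_weightedGap hc))
    (by rwa [Fintype.card_fin]) hL (by rwa [Fintype.card_fin])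
  refine (measureReal_mono (fun ω hω ↦ ?_) (measure_ne_top _ _)).trans htail
  simp only [Set.mem_ofPred_eq, Fintype.card_fin] at hω ⊢
  rw [← fFun_eq_neg_sum_weightedGap_mul_posSign hc, sqrt_mul_div_self hm'.le,
    ← sq_mul_rpow_mul_rpow_eq_sq_div_mul_sqrt Δ hm' hq']
  linarith [not_le.1 hω]

end ThresholdingModel

theorem stmt11_general {m : ℕ} {ι : Type*} (S : Finset ι) (c : ι → ℝ) (hc : ∀ j ∈ S, 0 ≤ c j)
    (μa μb : Fin m → ℝ) (hμa : ∀ i, |μa i| ≤ 1) (hμb : ∀ i, |μb i| ≤ 1)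
    (Δ : ℝ) (hΔ : 0 < Δ) (hopt : optEnvy μa μb ≤ -Δ)
    (q : ℕ) (hq1 : 1 ≤ q) (hq2 : (q : ℝ) ≤ 1 / 2 * m ^ 3 / Δ ^ 2)
    (L : ℝ) (hL : 0 ≤ L) (hq3 : (q : ℝ) ≤ m ^ 2 / L ^ 2) :
    ENNReal.ofReal (1 - S.card * exp (-(3 / 10) * L ^ 2)) ≤
      threshMeasure m q μa μb {ω | ∀ j ∈ S, fFun μa μb (c j) ω ≤
        -(1 / 5) * (m : ℝ) ^ (-(3 : ℝ) / 2) * (q : ℝ) ^ ((1 : ℝ) / 2) * Δ ^ 2 +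
          (m / √q) * L} := by
  have hm : 0 < m := by
    by_contra! hm
    obtain rfl : m = 0 := by omega
    norm_num at hq2
    omega
  have hΔq : q * Δ ^ 2 ≤ 1 / 2 * (m : ℝ) ^ 3 := (le_div_iff₀ (by positivity)).1 hq2
  have hLq : q * L ^ 2 ≤ (m : ℝ) ^ 2 := mul_le_of_le_div₀ (by positivity) (by positivity) hq3
  rw [← ofReal_measureReal]
  exact ENNReal.ofReal_le_ofReal <| one_sub_card_mul_le_measureReal_forall S _ fun j hj ↦
    measureReal_not_fFun_le_le_exp_neg_sq hμa hμb hm hq1 hΔ.le hopt hΔq hL hLq (hc j hj)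

/-- in the thresholding allocation model, if `OptEnvy ≤ -Δ`,
`q ≤ (1/2) m³/Δ²` and `q ≤ m²/(log m)²`, then with probability at least
`1 − 2 m⁶ exp(−(3/10)(log m)²)`, simultaneously for all grid values `c = k/m³`
(`k = 1, …, m⁶`), `f(c) ≤ −(1/5) m^{−3/2} q^{1/2} Δ² + (m/√q) log m`. -/
theorem stmt11 {m : ℕ} (μa μb : Fin m → ℝ)
    (hμa : ∀ i, μa i ∈ Set.Icc (0 : ℝ) 1) (hμb : ∀ i, μb i ∈ Set.Icc (0 : ℝ) 1)
    (Δ : ℝ) (hΔ : 0 < Δ) (hopt : optEnvy μa μb ≤ -Δ)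
    (q : ℕ) (hq1 : 1 ≤ q) (hq2 : (q : ℝ) ≤ 1 / 2 * m ^ 3 / Δ ^ 2)
    (hq3 : (q : ℝ) ≤ m ^ 2 / Real.log m ^ 2) :
    ENNReal.ofReal (1 - 2 * m ^ 6 * Real.exp (-(3 / 10) * Real.log m ^ 2)) ≤
      threshMeasure m q μa μb
        {ω | ∀ k : ℕ, 1 ≤ k → k ≤ m ^ 6 →
            fFun μa μb ((k : ℝ) / (m : ℝ) ^ 3) ω ≤
              -(1 / 5) * (m : ℝ) ^ (-(3 : ℝ) / 2) * (q : ℝ) ^ ((1 : ℝ) / 2) * Δ ^ 2 +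
                (m / Real.sqrt q) * Real.log m} := by
  have hgrid := stmt11_general (Finset.Icc 1 (m ^ 6)) (fun k ↦ (k : ℝ) / m ^ 3)
    (fun _ _ ↦ by positivity) μa μb
    (fun i ↦ abs_le.2 ⟨by linarith [(hμa i).1], (hμa i).2⟩)
    (fun i ↦ abs_le.2 ⟨by linarith [(hμb i).1], (hμb i).2⟩)
    Δ hΔ hopt q hq1 hq2 (log m) (log_natCast_nonneg m) hq3
  simp only [Finset.mem_Icc, and_imp, Nat.card_Icc, add_tsub_cancel_right, Nat.cast_pow] at hgrid
  refine (ENNReal.ofReal_le_ofReal ?_).trans hgrid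
  gcongr
  exact le_mul_of_one_le_left (by positivity) one_le_two
end
end

section
/- Let Δ : ℕ → ℝ be a sequence with Δ(m) ≥ m^{1/4}(log m)² for all sufficiently large m and Δ(m)·(log m)/m → 0 as m → ∞, set q(m) = m·⌈15 (m^{3/2}/Δ(m)²) log m + (log m)²⌉, and for each m let μ^a, μ^b ∈ [0,1]^m be any utility profiles with OptEnvy ≤ −Δ(m). In the thresholding allocation model with q = q(m) (estimate variance m/q), the probability of the following event tends to 1 as m → ∞: there exists c in the grid C = {k/m³ : k = 1, …, m⁶} such that (−2/c + 1)·(m/√q)·log m ≤ h(c) ≤ (2c − 1)·(m/√q)·log m, where h(c) = (e'_a(c) − c·e'_b(c))/(1+c). -/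
open MeasureTheory ProbabilityTheory Real Filter
open scoped ENNReal NNReal Classical

noncomputable section

/-- `h(c) = (e'_a(c) − c e'_b(c))/(1+c)`. -/
def hFun {m : ℕ} (c : ℝ) (ω : (Fin m × Bool) → ℝ) : ℝ :=
  (eA' c ω - c * eB' c ω) / (1 + c)

/-!
The lower envelope `(-2/c + 1) L` at `c + d` lies well below the upper envelope `(2c - 1) L` at
`c`, because `c + 1/c ≥ 2`. At the left end of the grid `h` is above the lower envelope and at the
right end it is below the upper one. So at the first grid point where `h` is below the upper
envelope it is also above the lower one, unless `h` drops by more than the gap in a single step.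
With all estimates bounded by `B`, a step of length `d` changes the sign of an item only if
`|v^b_i - c v^a_i| ≤ B d`, so a large drop needs many items near the threshold `c`. These events
are independent over the items, and `v^b_i - c v^a_i` has a Gaussian density bounded by
`√(q/m) ≤ √m`. Outside an event of probability `O(1/m)` one can take `B` constant, and then a union
bound over the `m⁶` grid points and the sets of seven items again leaves a probability `O(1/m)`.
-/

section HFun

variable {m : ℕ} {B c d : ℝ} {ω : Fin m × Bool → ℝ}

/-- The contribution `(v^a_i + c v^b_i) / (1 + c)` of item `i` to `-h(c)`, up to the sign
`x_i(c)`. -/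
def weightedEstimate (c : ℝ) (ω : Fin m × Bool → ℝ) (i : Fin m) : ℝ :=
  (ω (i, true) + c * ω (i, false)) / (1 + c)

/-- The items for which the sign `x_i` is about to change at the threshold `c`: those whose margin
`v^b_i - c v^a_i` has absolute value at most `w`. -/
def nearThreshold (c w : ℝ) (ω : Fin m × Bool → ℝ) : Finset (Fin m) :=
  {i | |ω (i, false) - c * ω (i, true)| ≤ w}

lemma abs_xSign (c : ℝ) (ω : Fin m × Bool → ℝ) (i : Fin m) : |xSign c ω i| = 1 := by
  unfold xSign
  split_ifs <;> simp

lemma hFun_eq_neg_sum (c : ℝ) (ω : Fin m × Bool → ℝ) :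
    hFun c ω = -∑ i, xSign c ω i * weightedEstimate c ω i := by
  unfold hFun eA' eB' weightedEstimate
  rw [Finset.mul_sum, ← Finset.sum_neg_distrib, ← Finset.sum_sub_distrib, Finset.sum_div,
    ← Finset.sum_neg_distrib]
  exact Finset.sum_congr rfl fun i _ ↦ by ring

lemma abs_weightedEstimate_le (hω : ∀ p, |ω p| ≤ B) (hc : 0 ≤ c) (i : Fin m) :
    |weightedEstimate c ω i| ≤ B := by
  rw [weightedEstimate, abs_div, abs_of_pos (by positivity : 0 < 1 + c),
    div_le_iff₀ (by positivity)]
  calc |ω (i, true) + c * ω (i, false)|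
      ≤ |ω (i, true)| + c * |ω (i, false)| := by
        simpa [abs_mul, abs_of_nonneg hc] using abs_add_le (ω (i, true)) (c * ω (i, false))
    _ ≤ B + c * B := by gcongr <;> exact hω _
    _ = B * (1 + c) := by ring

lemma abs_weightedEstimate_add_sub_le (hω : ∀ p, |ω p| ≤ B) (hc : 0 ≤ c) (hd : 0 ≤ d)
    (i : Fin m) :
    |weightedEstimate (c + d) ω i - weightedEstimate c ω i| ≤ 2 * B * d := by
  have h_diff : weightedEstimate (c + d) ω i - weightedEstimate c ω i =
      (ω (i, false) - ω (i, true)) * (d / ((1 + c) * (1 + (c + d)))) := by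
    unfold weightedEstimate
    field_simp
    ring
  have h_item : |ω (i, false) - ω (i, true)| ≤ 2 * B :=
    (abs_sub _ _).trans (by linarith [hω (i, false), hω (i, true)])
  have h_weight : d / ((1 + c) * (1 + (c + d))) ≤ d :=
    div_le_self hd (one_le_mul_of_one_le_of_one_le (by linarith) (by linarith))
  rw [h_diff, abs_mul, abs_of_nonneg (by positivity : 0 ≤ d / ((1 + c) * (1 + (c + d))))]
  exact mul_le_mul h_item h_weight (by positivity) ((abs_nonneg _).trans h_item)

lemma abs_hFun_le (hω : ∀ p, |ω p| ≤ B) (hc : 0 ≤ c) : |hFun c ω| ≤ B * m := by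
  rw [hFun_eq_neg_sum, abs_neg]
  calc |∑ i, xSign c ω i * weightedEstimate c ω i|
      ≤ ∑ i, |xSign c ω i * weightedEstimate c ω i| := Finset.abs_sum_le_sum_abs _ _
    _ ≤ ∑ _i : Fin m, B := by
        gcongr with i
        simpa [abs_mul, abs_xSign] using abs_weightedEstimate_le hω hc i
    _ = B * m := by simp [mul_comm]

lemma xSign_add_eq_of_notMem_nearThreshold (hω : ∀ p, |ω p| ≤ B) (hd : 0 ≤ d) {i : Fin m}
    (hi : i ∉ nearThreshold c (B * d) ω) : xSign (c + d) ω i = xSign c ω i := by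
  have h_margin : B * d < |ω (i, false) - c * ω (i, true)| := by simpa [nearThreshold] using hi
  have h_shift : |d * ω (i, true)| ≤ B * d := by
    rw [abs_mul, abs_of_nonneg hd, mul_comm]
    gcongr
    exact hω _
  obtain ⟨h_shift_ge, h_shift_le⟩ := abs_le.1 h_shift
  have h_iff : 0 < (c + d) * ω (i, true) - ω (i, false) ↔ 0 < c * ω (i, true) - ω (i, false) := by
    rcases lt_abs.1 h_margin with h | h <;> constructor <;> intro _ <;> linarith
  simp only [xSign, h_iff]

lemma abs_hFun_add_sub_le (hω : ∀ p, |ω p| ≤ B) (hc : 0 ≤ c) (hd : 0 ≤ d) :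
    |hFun (c + d) ω - hFun c ω| ≤ 2 * B * ((nearThreshold c (B * d) ω).card + d * m) := by
  set T := nearThreshold c (B * d) ω
  have h_item (i : Fin m) :
      |xSign (c + d) ω i * weightedEstimate (c + d) ω i - xSign c ω i * weightedEstimate c ω i| ≤
        (if i ∈ T then 2 * B else 0) + 2 * B * d := by
    have hB : 0 ≤ B := (abs_nonneg _).trans (hω (i, true))
    split_ifs with hi
    · refine (abs_sub _ _).trans ?_
      simp only [abs_mul, abs_xSign, one_mul]
      linarith [abs_weightedEstimate_le hω hc i, mul_nonneg hB hd,
        abs_weightedEstimate_le hω (add_nonneg hc hd) i]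
    · rw [xSign_add_eq_of_notMem_nearThreshold hω hd hi, ← mul_sub, abs_mul, abs_xSign, one_mul,
        zero_add]
      exact abs_weightedEstimate_add_sub_le hω hc hd i
  calc |hFun (c + d) ω - hFun c ω|
      = |∑ i, (xSign (c + d) ω i * weightedEstimate (c + d) ω i -
          xSign c ω i * weightedEstimate c ω i)| := by
        rw [hFun_eq_neg_sum, hFun_eq_neg_sum, Finset.sum_sub_distrib, ← abs_neg]
        ring_nf
    _ ≤ ∑ i, ((if i ∈ T then 2 * B else 0) + 2 * B * d) :=
        (Finset.abs_sum_le_sum_abs _ _).trans (Finset.sum_le_sum fun i _ ↦ h_item i)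
    _ = 2 * B * (T.card + d * m) := by
        simp only [Finset.sum_add_distrib, Finset.sum_ite_mem, Finset.univ_inter, Finset.sum_const,
          Finset.card_univ, Fintype.card_fin, nsmul_eq_mul]
        ring

end HFun

section GridCrossing

/-- The band `[(-2/c + 1) L, (2c - 1) L]` in which `h(c)` is sought. -/
def thresholdBand (L c : ℝ) : Set ℝ :=
  Set.Icc ((-2 / c + 1) * L) ((2 * c - 1) * L)

/-- The event that `h(c)` lies in the band of scale `L` for some `c` in the grid
`{k/n : k = 1, …, n²}`, which runs from `1/n` to `n`. -/
def gridCrossing (m n : ℕ) (L : ℝ) : Set (Fin m × Bool → ℝ) :=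
  {ω | ∃ k ∈ Set.Icc 1 (n ^ 2), hFun ((k : ℝ) / n) ω ∈ thresholdBand L ((k : ℝ) / n)}

lemma exists_mem_Icc_and_of_not_imp_succ {P Q : ℕ → Prop} {a b : ℕ} (hab : a ≤ b) (hQ : Q a)
    (hP : P b) (hstep : ∀ k ∈ Set.Ico a b, ¬ P k → Q (k + 1)) :
    ∃ k ∈ Set.Icc a b, P k ∧ Q k := by
  induction b, hab using Nat.le_induction with
  | base => exact ⟨a, ⟨le_rfl, le_rfl⟩, hP, hQ⟩
  | succ b hab ih =>
    by_cases hPb : P b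
    · obtain ⟨k, hk, hPQ⟩ := ih hPb fun k hk ↦ hstep k ⟨hk.1, hk.2.trans b.lt_succ_self⟩
      exact ⟨k, ⟨hk.1, hk.2.trans b.le_succ⟩, hPQ⟩
    · exact ⟨b + 1, ⟨by omega, le_rfl⟩, hP, hstep b ⟨hab, b.lt_succ_self⟩ hPb⟩

lemma neg_two_div_add_one_le {c : ℝ} (hc : 0 < c) : -2 / c + 1 ≤ 2 * c - 3 := by
  have h_gap : 2 * c - 3 - (-2 / c + 1) = 2 * (c - 1) ^ 2 / c := by
    field_simp
    ring
  have : 0 ≤ 2 * (c - 1) ^ 2 / c := by positivity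
  linarith

lemma lower_le_hFun_add_of_upper_lt_hFun {m : ℕ} {B L c d K : ℝ} {ω : Fin m × Bool → ℝ}
    (hω : ∀ p, |ω p| ≤ B) (hB : 0 ≤ B) (hL : 0 ≤ L) (hc : 0 ≤ c) (hd : 0 < d)
    (hK : (nearThreshold c (B * d) ω).card ≤ K) (hgap : 2 * B * (K + d * m) ≤ (2 - 2 * d) * L)
    (h : (2 * c - 1) * L < hFun c ω) :
    (-2 / (c + d) + 1) * L ≤ hFun (c + d) ω := by
  have h_drop : hFun c ω - 2 * B * (K + d * m) ≤ hFun (c + d) ω := by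
    have h_le : 2 * B * ((nearThreshold c (B * d) ω).card + d * m) ≤ 2 * B * (K + d * m) := by
      gcongr
    linarith [neg_le_of_abs_le (abs_hFun_add_sub_le hω hc hd.le)]
  calc (-2 / (c + d) + 1) * L
      ≤ (2 * (c + d) - 3) * L := by gcongr; exact neg_two_div_add_one_le (by positivity)
    _ = (2 * c - 1) * L - (2 - 2 * d) * L := by ring
    _ ≤ hFun (c + d) ω := by linarith

lemma mem_gridCrossing {m n : ℕ} {B L K : ℝ} {ω : Fin m × Bool → ℝ} (hn : 0 < n)
    (hω : ∀ p, |ω p| ≤ B) (hB : 0 ≤ B) (hL : 0 ≤ L) (hend : B * m ≤ (2 * n - 1) * L)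
    (hgap : 2 * B * (K + 1 / n * m) ≤ (2 - 2 * (1 / n)) * L)
    (hK : ∀ k < n ^ 2, (nearThreshold ((k : ℝ) / n) (B * (1 / n)) ω).card ≤ K) :
    ω ∈ gridCrossing m n L := by
  have hn' : (0 : ℝ) < n := by exact_mod_cast hn
  have h_left : (-2 / (((1 : ℕ) : ℝ) / n) + 1) * L ≤ hFun (((1 : ℕ) : ℝ) / n) ω := by
    have h_eq : (-2 / (((1 : ℕ) : ℝ) / n) + 1) * L = -((2 * n - 1) * L) := by
      field_simp
      ring
    have h_ge := neg_le_of_abs_le (abs_hFun_le hω (by positivity : 0 ≤ ((1 : ℕ) : ℝ) / n))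
    rw [h_eq]
    linarith
  have h_right : hFun (((n ^ 2 : ℕ) : ℝ) / n) ω ≤ (2 * (((n ^ 2 : ℕ) : ℝ) / n) - 1) * L := by
    have h_eq : ((n ^ 2 : ℕ) : ℝ) / n = n := by
      push_cast
      field_simp
    rw [h_eq]
    exact (le_of_abs_le (abs_hFun_le hω hn'.le)).trans hend
  obtain ⟨k, hk, h_upper, h_lower⟩ := exists_mem_Icc_and_of_not_imp_succ
    (P := fun k ↦ hFun ((k : ℝ) / n) ω ≤ (2 * ((k : ℝ) / n) - 1) * L)
    (Q := fun k ↦ (-2 / ((k : ℝ) / n) + 1) * L ≤ hFun ((k : ℝ) / n) ω)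
    (Nat.one_le_pow _ _ hn) h_left h_right fun k hk h ↦ by
      rw [Nat.cast_succ, add_div]
      exact lower_le_hFun_add_of_upper_lt_hFun hω hB hL (by positivity) (by positivity)
        (hK k hk.2) hgap (not_le.1 h)
  exact ⟨k, hk, h_lower, h_upper⟩

lemma mem_gridCrossing_cube {m : ℕ} {B L : ℝ} {ω : Fin m × Bool → ℝ} (hm : 2 ≤ m)
    (hω : ∀ p, |ω p| ≤ B) (hB : 0 ≤ B) (hL : 8 * B ≤ L)
    (hcard : ∀ k < m ^ 6,
      (nearThreshold ((k : ℝ) / (m ^ 3 : ℕ)) (B * (1 / (m ^ 3 : ℕ))) ω).card ≤ 6) :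
    ω ∈ gridCrossing m (m ^ 3) L := by
  have hm' : (2 : ℝ) ≤ m := by exact_mod_cast hm
  have h_cube : 4 * (m : ℝ) ≤ (m : ℝ) ^ 3 := by nlinarith [mul_self_nonneg ((m : ℝ) - 2)]
  have h_step : 1 / (m : ℝ) ^ 3 ≤ 1 / 8 := one_div_le_one_div_of_le (by norm_num) (by linarith)
  have h_step_mul : 1 / (m : ℝ) ^ 3 * m ≤ 1 / 4 := by
    rw [one_div_mul_eq_div, div_le_iff₀ (by positivity)]
    linarith
  refine mem_gridCrossing (by positivity) hω hB (by linarith) ?_ (K := 6) ?_ fun k hk ↦ ?_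
  · push_cast
    nlinarith
  · push_cast
    nlinarith
  · exact_mod_cast hcard k (by rwa [← pow_mul] at hk)

end GridCrossing

section Gaussian

lemma gaussianPDFReal_le_inv_sqrt (μ : ℝ) (v : ℝ≥0) (x : ℝ) :
    gaussianPDFReal μ v x ≤ (√(2 * π * v))⁻¹ := by
  have h_exponent : -(x - μ) ^ 2 / (2 * v) ≤ 0 :=
    div_nonpos_of_nonpos_of_nonneg (by linarith [sq_nonneg (x - μ)]) (by positivity)
  exact mul_le_of_le_one_right (by positivity) (Real.exp_le_one_iff.2 h_exponent)

lemma gaussianReal_real_abs_le_le (μ : ℝ) {v : ℝ≥0} (hv : v ≠ 0) {w : ℝ} (hw : 0 ≤ w) :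
    (gaussianReal μ v).real {x | |x| ≤ w} ≤ w * (√v)⁻¹ := by
  have h_set : {x : ℝ | |x| ≤ w} = Set.Icc (-w) w := by
    ext x
    exact abs_le (a := x) (b := w)
  have h_density : (√(2 * π * v))⁻¹ ≤ 1 / 2 * (√v)⁻¹ := by
    have h_two : 2 ≤ √(2 * π) := Real.le_sqrt_of_sq_le (by linarith [Real.pi_gt_three])
    rw [Real.sqrt_mul (by positivity), mul_inv, one_div]
    gcongr
  calc (gaussianReal μ v).real {x | |x| ≤ w}
      = ∫ x in Set.Icc (-w) w, gaussianPDFReal μ v x := by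
        rw [h_set, measureReal_def, gaussianReal_apply_eq_integral _ hv,
          ENNReal.toReal_ofReal (integral_nonneg fun x ↦ gaussianPDFReal_nonneg μ v x)]
    _ ≤ ∫ _x in Set.Icc (-w) w, (√(2 * π * v))⁻¹ :=
        integral_mono (integrable_gaussianPDFReal μ v).restrict (integrable_const _)
          (gaussianPDFReal_le_inv_sqrt μ v)
    _ = 2 * w * (√(2 * π * v))⁻¹ := by
        simp [Real.volume_real_Icc_of_le (neg_le_self hw), two_mul]
    _ ≤ 2 * w * (1 / 2 * (√v)⁻¹) := by gcongr
    _ = w * (√v)⁻¹ := by ring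

lemma hasSubgaussianMGF_id_gaussianReal (v : ℝ≥0) :
    HasSubgaussianMGF id v (gaussianReal 0 v) where
  integrable_exp_mul := integrable_exp_mul_gaussianReal
  mgf_le t := by simp [mgf_id_gaussianReal]

lemma gaussianReal_real_le_abs_sub_le (μ : ℝ) (v : ℝ≥0) {r : ℝ} (hr : 0 ≤ r) :
    (gaussianReal μ v).real {x | r ≤ |x - μ|} ≤ 2 * rexp (-r ^ 2 / (2 * v)) := by
  have h_law : HasLaw (fun x ↦ x - μ) (gaussianReal 0 v) (gaussianReal μ v) :=
    ⟨by fun_prop, by rw [gaussianReal_map_sub_const, sub_self]⟩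
  have h_set : {x : ℝ | r ≤ |x|} = {x | r ≤ id x} ∪ {x | r ≤ (-id) x} := by
    ext x
    exact le_abs (a := r) (b := x)
  have h_sub := hasSubgaussianMGF_id_gaussianReal v
  rw [h_law.measureReal_eq (p := fun x ↦ r ≤ |x|) (measurableSet_le (by fun_prop) (by fun_prop)),
    h_set, two_mul]
  exact (measureReal_union_le _ _).trans
    (add_le_add (h_sub.measure_ge_le hr) (h_sub.neg.measure_ge_le hr))

end Gaussian

section Independence

lemma iIndepFun_curry_pi {ι κ E : Type*} [Fintype ι] [Fintype κ] [MeasurableSpace E]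
    (ν : ι × κ → Measure E) [∀ p, IsProbabilityMeasure (ν p)] :
    iIndepFun (fun i (ω : ι × κ → E) j ↦ ω (i, j)) (Measure.pi ν) := by
  have h_curry := Measure.infinitePi_map_curry fun i j ↦ ν (i, j)
  have h_row (i : ι) :
      (Measure.infinitePi ν).map (fun ω j ↦ ω (i, j)) = Measure.infinitePi fun j ↦ ν (i, j) :=
    Measure.map_infinitePi_infinitePi_of_inj (Prod.mk_right_injective i)
  rw [← Measure.infinitePi_eq_pi, iIndepFun_iff_map_fun_eq_infinitePi_map (by fun_prop)]
  simp_rw [h_row]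
  exact h_curry

lemma measureReal_le_card_filter_le {Ω ι : Type*} [Fintype ι] {mΩ : MeasurableSpace Ω}
    {P : Measure Ω} {E : ι → Set Ω} (hE : iIndepSet E P) {ε : ℝ} (hε : ∀ i, P.real (E i) ≤ ε)
    (K : ℕ) :
    P.real {ω | K ≤ (Finset.univ.filter fun i ↦ ω ∈ E i).card} ≤
      (Fintype.card ι).choose K * ε ^ K := by
  have := hE.isProbabilityMeasure
  have h_cover : {ω | K ≤ (Finset.univ.filter fun i ↦ ω ∈ E i).card} ⊆
      ⋃ S ∈ Finset.univ.powersetCard K, ⋂ i ∈ S, E i := by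
    intro ω hω
    obtain ⟨S, hS, hcard⟩ := Finset.exists_subset_card_eq hω
    exact Set.mem_biUnion (Finset.mem_powersetCard.2 ⟨Finset.subset_univ S, hcard⟩)
      (Set.mem_iInter₂.2 fun i hi ↦ (Finset.mem_filter.1 (hS hi)).2)
  have h_inter (S : Finset ι) (hS : S ∈ Finset.univ.powersetCard K) :
      P.real (⋂ i ∈ S, E i) ≤ ε ^ K := by
    rw [measureReal_def, hE.meas_biInter, ENNReal.toReal_prod, ← (Finset.mem_powersetCard.1 hS).2]
    exact (Finset.prod_le_prod (fun _ _ ↦ measureReal_nonneg) fun i _ ↦ hε i).trans_eq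
      (Finset.prod_const ε)
  calc P.real {ω | K ≤ (Finset.univ.filter fun i ↦ ω ∈ E i).card}
      ≤ ∑ S ∈ Finset.univ.powersetCard K, P.real (⋂ i ∈ S, E i) :=
        (measureReal_mono h_cover (measure_ne_top P _)).trans (measureReal_biUnion_finset_le _ _)
    _ ≤ ∑ _S ∈ (Finset.univ : Finset ι).powersetCard K, ε ^ K := Finset.sum_le_sum h_inter
    _ = (Fintype.card ι).choose K * ε ^ K := by simp

end Independence

section ThreshMeasure

variable {m q : ℕ} {μa μb : Fin m → ℝ}

instance isProbabilityMeasure_threshMeasure : IsProbabilityMeasure (threshMeasure m q μa μb) := by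
  unfold threshMeasure
  infer_instance

lemma hasLaw_eval_threshMeasure (p : Fin m × Bool) :
    HasLaw (fun ω ↦ ω p) (gaussianReal (if p.2 then μa p.1 else μb p.1) ((m : ℝ≥0) / q))
      (threshMeasure m q μa μb) :=
  (measurePreserving_eval (fun p : Fin m × Bool ↦
    gaussianReal (if p.2 then μa p.1 else μb p.1) ((m : ℝ≥0) / q)) p).hasLaw

lemma iIndepFun_margin (c : ℝ) :
    iIndepFun (fun i ω ↦ ω (i, false) - c * ω (i, true)) (threshMeasure m q μa μb) :=
  (iIndepFun_curry_pi _).comp (fun _ x ↦ x false - c * x true) fun _ ↦ by fun_prop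

lemma hasLaw_margin (c : ℝ) (i : Fin m) :
    HasLaw (fun ω ↦ ω (i, false) - c * ω (i, true))
      (gaussianReal (μb i - c * μa i) ((1 + .mk (c ^ 2) (sq_nonneg c)) * ((m : ℝ≥0) / q)))
      (threshMeasure m q μa μb) := by
  have h_indep : IndepFun (fun ω ↦ ω (i, false)) (fun ω ↦ -c * ω (i, true))
      (threshMeasure m q μa μb) :=
    ((iIndepFun_pi (X := fun _ x ↦ x) fun _ ↦ aemeasurable_id).indepFun (by simp)).comp
      measurable_id (measurable_const_mul (-c))
  have h_false := hasLaw_eval_threshMeasure (q := q) (μa := μa) (μb := μb) (i, false)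
  have h_true := gaussianReal_const_mul
    (hasLaw_eval_threshMeasure (q := q) (μa := μa) (μb := μb) (i, true)) (-c)
  refine ⟨by fun_prop, ?_⟩
  have h_sum := gaussianReal_add_gaussianReal_of_indepFun h_indep h_false.map_eq h_true.map_eq
  convert h_sum using 2
  · ext ω
    simp [sub_eq_add_neg]
  · simp [sub_eq_add_neg]
  · simp [add_mul]

lemma threshMeasure_real_abs_margin_le (hm : m ≠ 0) (hq : q ≠ 0) {w : ℝ} (hw : 0 ≤ w) (c : ℝ)
    (i : Fin m) :
    (threshMeasure m q μa μb).real {ω | |ω (i, false) - c * ω (i, true)| ≤ w} ≤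
      w * √((q : ℝ) / m) := by
  have h_var : ((m : ℝ) / q) ≤ (1 + c ^ 2) * (m / q) :=
    le_mul_of_one_le_left (by positivity) (by linarith [sq_nonneg c])
  rw [(hasLaw_margin c i).measureReal_eq (p := fun x ↦ |x| ≤ w)
    (measurableSet_le (by fun_prop) (by fun_prop))]
  refine (gaussianReal_real_abs_le_le _ (by positivity) hw).trans ?_
  have h_inv : √((q : ℝ) / m) = (√((m : ℝ) / q))⁻¹ := by rw [← Real.sqrt_inv, inv_div]
  rw [h_inv]
  push_cast
  gcongr

lemma threshMeasure_real_le_card_nearThreshold_le (hm : m ≠ 0) (hq : q ≠ 0) {w : ℝ} (hw : 0 ≤ w)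
    (c : ℝ) (K : ℕ) :
    (threshMeasure m q μa μb).real {ω | K ≤ (nearThreshold c w ω).card} ≤
      m.choose K * (w * √((q : ℝ) / m)) ^ K := by
  have h_meas (i : Fin m) :
      MeasurableSet {ω : Fin m × Bool → ℝ | |ω (i, false) - c * ω (i, true)| ≤ w} :=
    measurableSet_le (by fun_prop) (by fun_prop)
  have h_indep : iIndepSet
      (fun i ↦ {ω : Fin m × Bool → ℝ | |ω (i, false) - c * ω (i, true)| ≤ w})
      (threshMeasure m q μa μb) :=
    (iIndepSet_iff_meas_biInter h_meas).2 fun S ↦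
      (iIndepFun_margin c).measure_inter_preimage_eq_mul S (sets := fun _ ↦ {x | |x| ≤ w})
        fun _ _ ↦ measurableSet_le (by fun_prop) (by fun_prop)
  simpa [nearThreshold] using
    measureReal_le_card_filter_le h_indep (threshMeasure_real_abs_margin_le hm hq hw c) K

lemma threshMeasure_real_exists_lt_abs_le {R r : ℝ} (hμa : ∀ i, |μa i| ≤ R)
    (hμb : ∀ i, |μb i| ≤ R) (hr : 0 ≤ r) :
    (threshMeasure m q μa μb).real {ω | ∃ p, R + r < |ω p|} ≤
      4 * m * rexp (-r ^ 2 / (2 * (m / q))) := by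
  have h_item (p : Fin m × Bool) : (threshMeasure m q μa μb).real {ω | R + r < |ω p|} ≤
      2 * rexp (-r ^ 2 / (2 * (m / q))) := by
    set μ := if p.2 then μa p.1 else μb p.1 with hμ_def
    have hμ : |μ| ≤ R := by
      rw [hμ_def]
      split_ifs <;> simp only [hμa, hμb]
    rw [(hasLaw_eval_threshMeasure p).measureReal_eq (p := fun x ↦ R + r < |x|)
      (measurableSet_lt (by fun_prop) (by fun_prop))]
    have h_subset : {x : ℝ | R + r < |x|} ⊆ {x | r ≤ |x - μ|} := fun x (hx : R + r < |x|) ↦ by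
      have := abs_sub_abs_le_abs_sub x μ
      simp only [Set.mem_ofPred_eq]
      linarith
    simpa using (measureReal_mono h_subset).trans (gaussianReal_real_le_abs_sub_le μ (m / q) hr)
  rw [Set.ofPred_exists]
  refine (measureReal_iUnion_fintype_le _).trans
    ((Finset.sum_le_sum fun p _ ↦ h_item p).trans_eq ?_)
  simp only [Finset.sum_const, Finset.card_univ, Fintype.card_prod, Fintype.card_fin,
    Fintype.card_bool, nsmul_eq_mul]
  push_cast
  ring

end ThreshMeasure

section Asymptotics

variable {m q : ℕ} {μa μb : Fin m → ℝ} {R B : ℝ}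

lemma threshMeasure_real_exists_add_one_lt_abs_le (hμa : ∀ i, |μa i| ≤ R) (hμb : ∀ i, |μb i| ≤ R)
    (hm : 0 < m) (hlog : 4 ≤ Real.log m) (hq : m * Real.log m ^ 2 ≤ q) :
    (threshMeasure m q μa μb).real {ω | ∃ p, R + 1 < |ω p|} ≤ 4 / m := by
  have hm' : (0 : ℝ) < m := by exact_mod_cast hm
  have h_exponent : -1 ^ 2 / (2 * ((m : ℝ) / q)) ≤ -(2 * Real.log m) := by
    have h_eq : -1 ^ 2 / (2 * ((m : ℝ) / q)) = -(q / m / 2) := by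
      rw [one_pow, neg_div, one_div, mul_inv, inv_div]
      ring
    have h_sq : Real.log m ^ 2 ≤ q / m := (le_div_iff₀' hm').2 hq
    rw [h_eq]
    nlinarith
  calc (threshMeasure m q μa μb).real {ω | ∃ p, R + 1 < |ω p|}
      ≤ 4 * m * rexp (-1 ^ 2 / (2 * (m / q))) :=
        threshMeasure_real_exists_lt_abs_le hμa hμb zero_le_one
    _ ≤ 4 * m * rexp (-(2 * Real.log m)) := by gcongr
    _ = 4 / m := by
        rw [Real.exp_neg, two_mul, Real.exp_add, Real.exp_log hm']
        field_simp

lemma threshMeasure_real_exists_seven_le_card_nearThreshold_le (hm : 0 < m) (hq : 0 < q)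
    (hqm : q ≤ m ^ 2) (hB : 0 ≤ B) :
    (threshMeasure m q μa μb).real {ω | ∃ k < m ^ 6,
        7 ≤ (nearThreshold ((k : ℝ) / (m ^ 3 : ℕ)) (B * (1 / (m ^ 3 : ℕ))) ω).card} ≤
      B ^ 7 / m := by
  have hm' : (1 : ℝ) ≤ m := by exact_mod_cast hm
  have h_sqrt : √((q : ℝ) / m) ≤ m := by
    have hqm' : (q : ℝ) ≤ m ^ 2 := by exact_mod_cast hqm
    refine Real.sqrt_le_iff.2 ⟨by positivity, ?_⟩
    exact (div_le_self (by positivity) hm').trans hqm'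
  have h_choose : (m.choose 7 : ℝ) ≤ m ^ 7 := by exact_mod_cast Nat.choose_le_pow m 7
  have h_union : {ω : Fin m × Bool → ℝ | ∃ k < m ^ 6,
        7 ≤ (nearThreshold ((k : ℝ) / (m ^ 3 : ℕ)) (B * (1 / (m ^ 3 : ℕ))) ω).card} =
      ⋃ k ∈ Finset.range (m ^ 6), {ω |
        7 ≤ (nearThreshold ((k : ℝ) / (m ^ 3 : ℕ)) (B * (1 / (m ^ 3 : ℕ))) ω).card} := by
    ext ω
    simp
  rw [h_union]
  calc (threshMeasure m q μa μb).real _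
      ≤ ∑ _k ∈ Finset.range (m ^ 6), (m.choose 7 : ℝ) *
          (B * (1 / (m ^ 3 : ℕ)) * √((q : ℝ) / m)) ^ 7 :=
        (measureReal_biUnion_finset_le _ _).trans <| Finset.sum_le_sum fun k _ ↦
          threshMeasure_real_le_card_nearThreshold_le hm.ne' hq.ne' (by positivity) _ 7
    _ ≤ ∑ _k ∈ Finset.range (m ^ 6), (m : ℝ) ^ 7 * (B * (1 / (m ^ 3 : ℕ)) * m) ^ 7 := by gcongr
    _ = B ^ 7 / m := by
        simp only [Finset.sum_const, Finset.card_range, nsmul_eq_mul]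
        push_cast
        field_simp

lemma le_div_sqrt_mul_log (hlog : 0 ≤ Real.log m) (hq : 0 < q) (hqm : q ≤ m ^ 2) :
    Real.log m ≤ m / √q * Real.log m := by
  refine le_mul_of_one_le_left hlog ((one_le_div (by positivity)).2 ?_)
  exact Real.sqrt_le_iff.2 ⟨by positivity, by exact_mod_cast hqm⟩

lemma one_sub_le_threshMeasure_real_gridCrossing (hμa : ∀ i, |μa i| ≤ R) (hμb : ∀ i, |μb i| ≤ R)
    (hm : 2 ≤ m) (hlog : 8 * (R + 1) ≤ Real.log m) (hq : m * Real.log m ^ 2 ≤ q)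
    (hqm : q ≤ m ^ 2) :
    1 - (4 + (R + 1) ^ 7) / m ≤
      (threshMeasure m q μa μb).real (gridCrossing m (m ^ 3) (m / √q * Real.log m)) := by
  set P := threshMeasure m q μa μb
  set large := {ω : Fin m × Bool → ℝ | ∃ p, R + 1 < |ω p|} with h_large_def
  set crowded := {ω : Fin m × Bool → ℝ | ∃ k < m ^ 6, 7 ≤
    (nearThreshold ((k : ℝ) / (m ^ 3 : ℕ)) ((R + 1) * (1 / (m ^ 3 : ℕ))) ω).card}
    with h_crowded_def
  have hR : 0 ≤ R := (abs_nonneg _).trans (hμa ⟨0, by omega⟩)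
  have hlog_pos : 0 < Real.log m := by linarith
  have hq_pos : 0 < q := by
    have : (0 : ℝ) < q := lt_of_lt_of_le (by positivity) hq
    exact_mod_cast this
  have h_scale := le_div_sqrt_mul_log hlog_pos.le hq_pos hqm
  have h_cover : Set.univ ⊆ gridCrossing m (m ^ 3) (m / √q * Real.log m) ∪ (large ∪ crowded) := by
    refine fun ω _ ↦ or_iff_not_imp_right.2 fun hω ↦ ?_
    simp only [h_large_def, h_crowded_def, Set.mem_union, Set.mem_ofPred_eq, not_or, not_exists,
      not_and, not_lt, not_le] at hω
    exact mem_gridCrossing_cube hm hω.1 (by positivity) (by linarith)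
      fun k hk ↦ Nat.le_of_lt_succ (hω.2 k hk)
  have h_total : 1 ≤ P.real (gridCrossing m (m ^ 3) (m / √q * Real.log m)) +
      (P.real large + P.real crowded) := by
    have h_mono := measureReal_mono (μ := P) h_cover
    rw [probReal_univ] at h_mono
    exact h_mono.trans <| (measureReal_union_le _ _).trans <| by
      gcongr
      exact measureReal_union_le _ _
  have h_large : P.real large ≤ 4 / m :=
    threshMeasure_real_exists_add_one_lt_abs_le hμa hμb (by omega) (by linarith) hq
  have h_crowded : P.real crowded ≤ (R + 1) ^ 7 / m :=
    threshMeasure_real_exists_seven_le_card_nearThreshold_le (by omega) hq_pos hqm (by positivity)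
  rw [add_div]
  linarith

end Asymptotics

section SampleSize

/-- The number `m ⌈15 (m^{3/2}/D²) log m + (log m)²⌉` of samples spent on `m` items when the envy
margin is `D`. -/
def sampleSize (m : ℕ) (D : ℝ) : ℕ :=
  m * ⌈15 * ((m : ℝ) ^ ((3 : ℝ) / 2) / D ^ 2) * Real.log m + Real.log m ^ 2⌉₊

lemma rpow_three_halves_div_sq_le {x ℓ D : ℝ} (hx : 0 < x) (hℓ : 0 < ℓ)
    (hD : x ^ ((1 : ℝ) / 4) * ℓ ^ 2 ≤ D) : x ^ ((3 : ℝ) / 2) / D ^ 2 ≤ x / ℓ ^ 4 := by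
  have h_rpow : x ^ ((3 : ℝ) / 2) = x * (x ^ ((1 : ℝ) / 4)) ^ 2 := by
    rw [← Real.rpow_natCast, ← Real.rpow_mul hx.le, ← Real.rpow_one_add' hx.le (by norm_num)]
    norm_num
  calc x ^ ((3 : ℝ) / 2) / D ^ 2
      ≤ x ^ ((3 : ℝ) / 2) / (x ^ ((1 : ℝ) / 4) * ℓ ^ 2) ^ 2 := by gcongr
    _ = x / ℓ ^ 4 := by
        rw [h_rpow]
        field_simp

lemma mul_log_sq_le_sampleSize (m : ℕ) (D : ℝ) : m * Real.log m ^ 2 ≤ sampleSize m D := by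
  have := Real.log_natCast_nonneg m
  rw [sampleSize, Nat.cast_mul]
  gcongr
  exact (le_add_of_nonneg_left (by positivity)).trans (Nat.le_ceil _)

lemma eventually_sampleSize_le_sq {Δ : ℕ → ℝ}
    (hΔ : ∀ᶠ m : ℕ in atTop, (m : ℝ) ^ ((1 : ℝ) / 4) * Real.log m ^ 2 ≤ Δ m) :
    ∀ᶠ m : ℕ in atTop, sampleSize m (Δ m) ≤ m ^ 2 := by
  have h_log : ∀ᶠ m : ℕ in atTop, 4 ≤ Real.log m :=
    (Real.tendsto_log_atTop.comp tendsto_natCast_atTop_atTop).eventually_ge_atTop 4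
  have h_log_sq : ∀ᶠ m : ℕ in atTop, ‖Real.log (m : ℝ) ^ 2‖ ≤ 1 / 2 * ‖id (m : ℝ)‖ :=
    tendsto_natCast_atTop_atTop.eventually
      ((Real.isLittleO_pow_log_id_atTop (n := 2)).def one_half_pos)
  filter_upwards [hΔ, h_log, h_log_sq, eventually_gt_atTop 0] with m hΔm h4 h_sq hm
  have hm' : (0 : ℝ) < m := by exact_mod_cast hm
  rw [Real.norm_of_nonneg (by positivity), id, Real.norm_of_nonneg hm'.le] at h_sq
  set ℓ := Real.log m
  have h_main : 15 * ((m : ℝ) ^ ((3 : ℝ) / 2) / Δ m ^ 2) * ℓ ≤ 1 / 2 * m := by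
    calc 15 * ((m : ℝ) ^ ((3 : ℝ) / 2) / Δ m ^ 2) * ℓ
        ≤ 15 * (m / ℓ ^ 4) * ℓ := by
          gcongr 15 * ?_ * ℓ
          exact rpow_three_halves_div_sq_le hm' (by linarith) hΔm
      _ = 15 / ℓ ^ 3 * m := by field_simp
      _ ≤ 15 / 4 ^ 3 * m := by gcongr
      _ ≤ 1 / 2 * m := by gcongr ?_ * (m : ℝ); norm_num
  rw [sampleSize, sq m]
  exact Nat.mul_le_mul_left m (Nat.ceil_le.2 (by linarith))

end SampleSize

theorem stmt14_general (R : ℝ) (q : ℕ → ℕ)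
    (hq : ∀ᶠ m : ℕ in atTop, m * Real.log m ^ 2 ≤ q m) (hqm : ∀ᶠ m : ℕ in atTop, q m ≤ m ^ 2)
    (μa μb : (m : ℕ) → Fin m → ℝ) (hμa : ∀ m i, |μa m i| ≤ R) (hμb : ∀ m i, |μb m i| ≤ R) :
    Tendsto (fun m : ℕ =>
        (threshMeasure m (q m) (μa m) (μb m)
            {ω | ∃ k : ℕ, 1 ≤ k ∧ k ≤ m ^ 6 ∧
                ((-2 / ((k : ℝ) / (m : ℝ) ^ 3) + 1) * ((m : ℝ) / Real.sqrt (q m)) *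
                    Real.log m ≤ hFun ((k : ℝ) / (m : ℝ) ^ 3) ω ∧
                  hFun ((k : ℝ) / (m : ℝ) ^ 3) ω ≤
                    (2 * ((k : ℝ) / (m : ℝ) ^ 3) - 1) * ((m : ℝ) / Real.sqrt (q m)) *
                      Real.log m)}).toReal)
      atTop (nhds 1) := by
  suffices Tendsto (fun m ↦ (threshMeasure m (q m) (μa m) (μb m)).real
      (gridCrossing m (m ^ 3) (m / √(q m) * Real.log m))) atTop (nhds 1) by
    simpa only [gridCrossing, thresholdBand, measureReal_def, Set.mem_Icc, Nat.cast_pow, ← pow_mul,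
      Nat.reduceMul, and_assoc, mul_assoc] using this
  have h_lim : Tendsto (fun m : ℕ ↦ 1 - (4 + (R + 1) ^ 7) / (m : ℝ)) atTop (nhds 1) := by
    have h := (tendsto_const_div_atTop_nhds_zero_nat (4 + (R + 1) ^ 7)).const_sub (1 : ℝ)
    rwa [sub_zero] at h
  have h_log : ∀ᶠ m : ℕ in atTop, 8 * (R + 1) ≤ Real.log m :=
    (Real.tendsto_log_atTop.comp tendsto_natCast_atTop_atTop).eventually_ge_atTop _
  refine tendsto_of_tendsto_of_tendsto_of_le_of_le' h_lim tendsto_const_nhds ?_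
    (.of_forall fun m ↦ measureReal_le_one)
  filter_upwards [hq, hqm, h_log, eventually_ge_atTop 2] with m hq hqm h_log hm
  exact one_sub_le_threshMeasure_real_gridCrossing (hμa m) (hμb m) hm h_log hq hqm

/-- in the thresholding allocation model with
`q(m) = m ⌈15 (m^{3/2}/Δ(m)²) log m + (log m)²⌉` and profiles with `OptEnvy ≤ -Δ(m)`, the
probability that some grid value `c = k/m³` (`k = 1, …, m⁶`) satisfies
`(−2/c + 1)(m/√q) log m ≤ h(c) ≤ (2c − 1)(m/√q) log m` tends to `1`. -/
theorem stmt14 (Δ : ℕ → ℝ)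
    (hΔ1 : ∀ᶠ m : ℕ in atTop, (m : ℝ) ^ ((1 : ℝ) / 4) * Real.log m ^ 2 ≤ Δ m)
    (hΔ2 : Tendsto (fun m : ℕ => Δ m * Real.log m / m) atTop (nhds 0))
    (q : ℕ → ℕ)
    (hq : ∀ m : ℕ,
      q m = m * ⌈15 * ((m : ℝ) ^ ((3 : ℝ) / 2) / Δ m ^ 2) * Real.log m + Real.log m ^ 2⌉₊)
    (μa μb : (m : ℕ) → Fin m → ℝ)
    (hμa : ∀ m i, μa m i ∈ Set.Icc (0 : ℝ) 1) (hμb : ∀ m i, μb m i ∈ Set.Icc (0 : ℝ) 1)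
    (hopt : ∀ m : ℕ, optEnvy (μa m) (μb m) ≤ -Δ m) :
    Tendsto (fun m : ℕ =>
        (threshMeasure m (q m) (μa m) (μb m)
            {ω | ∃ k : ℕ, 1 ≤ k ∧ k ≤ m ^ 6 ∧
                ((-2 / ((k : ℝ) / (m : ℝ) ^ 3) + 1) * ((m : ℝ) / Real.sqrt (q m)) *
                    Real.log m ≤ hFun ((k : ℝ) / (m : ℝ) ^ 3) ω ∧
                  hFun ((k : ℝ) / (m : ℝ) ^ 3) ω ≤
                    (2 * ((k : ℝ) / (m : ℝ) ^ 3) - 1) * ((m : ℝ) / Real.sqrt (q m)) *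
                      Real.log m)}).toReal)
      atTop (nhds 1) := by
  obtain rfl : q = fun m ↦ sampleSize m (Δ m) := funext hq
  exact stmt14_general 1 _ (.of_forall fun m ↦ mul_log_sq_le_sampleSize m (Δ m))
    (eventually_sampleSize_le_sq hΔ1) μa μb
    (fun m i ↦ abs_le.2 ⟨by linarith [(hμa m i).1], (hμa m i).2⟩)
    (fun m i ↦ abs_le.2 ⟨by linarith [(hμb m i).1], (hμb m i).2⟩)
end
end
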